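/- Let G be a simple graph on Fin N with at least one edge, K > 0, ω : Fin N → ℝ, and let θ : Fin N → ℝ be an equilibrium of the non-identical Kuramoto system (for every vertex k, ω k + K·∑_j a(j,k)·sin(θ j − θ k) = 0) which is a local minimum of the energy E(φ) = −∑_h ω h · φ h + K·(1/2)·∑_{p,q} a(p,q)·(1 − cos(φ p − φ q)). Then the Jacobian matrix M, defined by M(j,k) = K·a(j,k)·cos(θ j − θ k) for j ≠ k and M(k,k) = −K·∑_j a(j,k)·cos(θ j − θ k), has a strictly negative eigenvalue: there exist a nonzero vector v : Fin N → ℝ and a real number λ < 0 with M.mulVec v = λ • v. -/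

import Mathlib

open Real

open Classical in
/-- Adjacency indicator: `1` if `j` and `k` are adjacent in `G`, `0` otherwise. -/
noncomputable def adjInd {V : Type*} (G : SimpleGraph V) (j k : V) : ℝ :=
  if G.Adj j k then 1 else 0

/-- A completely degenerate equilibrium of the identical Kuramoto system on `G`. -/
def IsCDE {V : Type*} [Fintype V] (G : SimpleGraph V) (θ : V → ℝ) : Prop :=
  (∀ k, ∑ j, adjInd G j k * Real.sin (θ j - θ k) = 0) ∧
  (∀ j k, G.Adj j k → Real.cos (θ j - θ k) = 0)

/-- The energy of the non-identical Kuramoto system (double sum over ordered pairs,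
halved). -/
noncomputable def energyNonId {N : ℕ} (G : SimpleGraph (Fin N)) (K : ℝ) (ω : Fin N → ℝ)
    (φ : Fin N → ℝ) : ℝ :=
  - ∑ h, ω h * φ h + K * ((1 / 2) * ∑ p, ∑ q, adjInd G p q * (1 - Real.cos (φ p - φ q)))


lemma adjInd_symm' {V : Type*} (G : SimpleGraph V) (j k : V) : adjInd G j k = adjInd G k j := by
  unfold adjInd; rw [G.adj_comm j k]

lemma adjInd_self' {V : Type*} (G : SimpleGraph V) (j : V) : adjInd G j j = 0 := by
  unfold adjInd; simp

lemma energy_second {N : ℕ} (G : SimpleGraph (Fin N)) (K : ℝ) (ω θ x : Fin N → ℝ) :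
    energyNonId G K ω (θ + x) + energyNonId G K ω (θ - x) - 2 * energyNonId G K ω θ
      = K * ∑ p, ∑ q, adjInd G p q * (Real.cos (θ p - θ q) * (1 - Real.cos (x p - x q))) := by
  have h1 : ∑ h, ω h * (θ + x) h + ∑ h, ω h * (θ - x) h = 2 * ∑ h, ω h * θ h := by
    rw [← Finset.sum_add_distrib, Finset.mul_sum]
    refine Finset.sum_congr rfl fun h _ => ?_
    simp only [Pi.add_apply, Pi.sub_apply]; ring
  have h2 : (∑ p, ∑ q, adjInd G p q * (1 - Real.cos ((θ + x) p - (θ + x) q)))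
      + (∑ p, ∑ q, adjInd G p q * (1 - Real.cos ((θ - x) p - (θ - x) q)))
      - 2 * (∑ p, ∑ q, adjInd G p q * (1 - Real.cos (θ p - θ q)))
      = 2 * ∑ p, ∑ q, adjInd G p q * (Real.cos (θ p - θ q) * (1 - Real.cos (x p - x q))) := by
    simp only [Finset.mul_sum, ← Finset.sum_add_distrib, ← Finset.sum_sub_distrib]
    refine Finset.sum_congr rfl fun p _ => Finset.sum_congr rfl fun q _ => ?_
    have e1 : (θ + x) p - (θ + x) q = (θ p - θ q) + (x p - x q) := by
      simp only [Pi.add_apply]; ring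
    have e2 : (θ - x) p - (θ - x) q = (θ p - θ q) - (x p - x q) := by
      simp only [Pi.sub_apply]; ring
    rw [e1, e2, Real.cos_add (θ p - θ q), Real.cos_sub (θ p - θ q) (x p - x q)]; ring
  unfold energyNonId
  linear_combination -h1 + K / 2 * h2

lemma energy_mixed {N : ℕ} (G : SimpleGraph (Fin N)) (K : ℝ) (ω θ x y : Fin N → ℝ)
    (hc : ∀ p q, adjInd G p q * Real.cos (θ p - θ q) = 0) :
    energyNonId G K ω (θ + x + y) - energyNonId G K ω (θ + x) - energyNonId G K ω (θ + y)
      + energyNonId G K ω θ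
      = K * (1 / 2) * ∑ p, ∑ q, adjInd G p q * (Real.sin (θ p - θ q) *
        (Real.sin (x p - x q + (y p - y q)) - Real.sin (x p - x q) - Real.sin (y p - y q))) := by
  have h1 : ∑ h, ω h * (θ + x + y) h - ∑ h, ω h * (θ + x) h - ∑ h, ω h * (θ + y) h
      + ∑ h, ω h * θ h = 0 := by
    simp only [← Finset.sum_add_distrib, ← Finset.sum_sub_distrib]
    refine Finset.sum_eq_zero fun h _ => ?_
    simp only [Pi.add_apply]; ring
  have h2 : (∑ p, ∑ q, adjInd G p q * (1 - Real.cos ((θ + x + y) p - (θ + x + y) q)))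
      - (∑ p, ∑ q, adjInd G p q * (1 - Real.cos ((θ + x) p - (θ + x) q)))
      - (∑ p, ∑ q, adjInd G p q * (1 - Real.cos ((θ + y) p - (θ + y) q)))
      + (∑ p, ∑ q, adjInd G p q * (1 - Real.cos (θ p - θ q)))
      = ∑ p, ∑ q, adjInd G p q * (Real.sin (θ p - θ q) *
        (Real.sin (x p - x q + (y p - y q)) - Real.sin (x p - x q) - Real.sin (y p - y q))) := by
    simp only [← Finset.sum_add_distrib, ← Finset.sum_sub_distrib]
    refine Finset.sum_congr rfl fun p _ => Finset.sum_congr rfl fun q _ => ?_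
    have e1 : (θ + x) p - (θ + x) q = (θ p - θ q) + (x p - x q) := by
      simp only [Pi.add_apply]; ring
    have e2 : (θ + y) p - (θ + y) q = (θ p - θ q) + (y p - y q) := by
      simp only [Pi.add_apply]; ring
    have e3 : (θ + x + y) p - (θ + x + y) q = (θ p - θ q) + (x p - x q + (y p - y q)) := by
      simp only [Pi.add_apply]; ring
    rw [e1, e2, e3, Real.cos_add (θ p - θ q), Real.cos_add (θ p - θ q), Real.cos_add (θ p - θ q)]
    linear_combination (1 - Real.cos (x p - x q + (y p - y q)) - (1 - Real.cos (x p - x q))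
      - (1 - Real.cos (y p - y q))) * hc p q
  unfold energyNonId
  linear_combination -h1 + K / 2 * h2

lemma sum_single_second {N : ℕ} (G : SimpleGraph (Fin N)) (θ : Fin N → ℝ) (k : Fin N) (t : ℝ) :
    ∑ p, ∑ q, adjInd G p q * (Real.cos (θ p - θ q) *
      (1 - Real.cos ((Pi.single k t : Fin N → ℝ) p - (Pi.single k t : Fin N → ℝ) q)))
      = 2 * (1 - Real.cos t) * ∑ i, adjInd G i k * Real.cos (θ i - θ k) := by
  have h : ∀ p q, adjInd G p q * (Real.cos (θ p - θ q) *
      (1 - Real.cos ((Pi.single k t : Fin N → ℝ) p - (Pi.single k t : Fin N → ℝ) q)))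
      = (if p = k then (1 - Real.cos t) * (adjInd G q k * Real.cos (θ q - θ k)) else 0)
      + (if q = k then (1 - Real.cos t) * (adjInd G p k * Real.cos (θ p - θ k)) else 0) := by
    intro p q
    by_cases hp : p = k
    · by_cases hq : q = k
      · subst hp; subst hq; simp [adjInd_self']
      · subst hp
        rw [adjInd_symm' G p q, ← Real.cos_neg (θ p - θ q)]
        simp [hq]; ring
    · by_cases hq : q = k
      · subst hq
        simp [hp]; ring
      · simp [hp, hq]
  simp only [h, Finset.sum_add_distrib]
  rw [Finset.sum_comm]
  simp [← Finset.mul_sum]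
  ring

lemma sum_mixed {N : ℕ} (G : SimpleGraph (Fin N)) (θ : Fin N → ℝ) (k l : Fin N) (hkl : k ≠ l)
    (t : ℝ) (x y : Fin N → ℝ) (hx : x = Pi.single k t) (hy : y = Pi.single l (-t)) :
    ∑ p, ∑ q, adjInd G p q * (Real.sin (θ p - θ q) *
        (Real.sin (x p - x q + (y p - y q)) - Real.sin (x p - x q) - Real.sin (y p - y q)))
      = 2 * (adjInd G k l * (Real.sin (θ k - θ l) * (Real.sin (2 * t) - 2 * Real.sin t))) := by
  have h : ∀ p q, adjInd G p q * (Real.sin (θ p - θ q) *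
        (Real.sin (x p - x q + (y p - y q)) - Real.sin (x p - x q) - Real.sin (y p - y q)))
      = (if p = k then if q = l then
          (adjInd G k l * (Real.sin (θ k - θ l) * (Real.sin (2 * t) - 2 * Real.sin t))) else 0 else 0)
      + (if p = l then if q = k then
          (adjInd G k l * (Real.sin (θ k - θ l) * (Real.sin (2 * t) - 2 * Real.sin t))) else 0 else 0) := by
    intro p q
    subst hx hy
    have hlk := hkl.symm
    by_cases hp : p = k
    · subst hp
      by_cases hq : q = l
      · subst hq
        simp [hkl, hlk, two_mul]; ring_nf; simp
      · by_cases hq' : q = p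
        · subst hq'; simp [adjInd_self', hkl]
        · simp [hkl, hq, hq']
    · by_cases hp' : p = l
      · subst hp'
        by_cases hq : q = k
        · subst hq
          rw [adjInd_symm' G p q, ← neg_sub (θ q) (θ p), Real.sin_neg]
          have : -t + -t = -(2 * t) := by ring
          simp [hkl, hlk, this]; ring_nf
        · by_cases hq' : q = p
          · subst hq'; simp [adjInd_self', hlk]
          · simp [hlk, hq, hq']
      · by_cases hq : q = k
        · subst hq; simp [hp, hp', hkl]
        · by_cases hq' : q = l
          · subst hq'; simp [hp, hp', hlk]
          · simp [hp, hp', hq, hq']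
  simp only [h, Finset.sum_add_distrib]
  simp
  ring

/-- on a graph with at least one edge, an equilibrium of the non-identical
Kuramoto system (coupling `K > 0`) which is a local minimum of the energy has a Jacobian
with a strictly negative eigenvalue. -/
theorem stmt18 {N : ℕ} (G : SimpleGraph (Fin N)) (hE : G.edgeSet.Nonempty)
    (K : ℝ) (hK : 0 < K) (ω θ : Fin N → ℝ)
    (heq : ∀ k : Fin N, ω k + K * ∑ j, adjInd G j k * Real.sin (θ j - θ k) = 0)
    (hmin : IsLocalMin (energyNonId G K ω) θ) :
    ∃ (v : Fin N → ℝ) (lam : ℝ), v ≠ 0 ∧ lam < 0 ∧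
      (Matrix.of (fun j k : Fin N =>
          if j = k then -K * ∑ i, adjInd G i k * Real.cos (θ i - θ k)
          else K * adjInd G j k * Real.cos (θ j - θ k))).mulVec v = lam • v := by
  classical
  by_contra hno
  -- neighbourhood
  obtain ⟨ε, hε, hball⟩ := Metric.eventually_nhds_iff.1 hmin
  have hnear : ∀ x : Fin N → ℝ, ‖x‖ < ε → energyNonId G K ω θ ≤ energyNonId G K ω (θ + x) := by
    intro x hx
    apply hball
    simpa [dist_eq_norm] using hx
  obtain ⟨t, ht0, htε, ht1⟩ : ∃ t : ℝ, 0 < t ∧ t + t < ε ∧ t < 1 :=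
    ⟨min (ε / 4) (1 / 2), by positivity, by
      have := min_le_left (ε / 4) (1 / 2 : ℝ); linarith, by
      have := min_le_right (ε / 4) (1 / 2 : ℝ); linarith⟩
  have hcost : Real.cos t < 1 := by
    have := Real.cos_lt_cos_of_nonneg_of_le_pi_div_two le_rfl
      (by linarith [Real.pi_gt_three] : t ≤ π / 2) ht0
    simpa using this
  have hsint : 0 < Real.sin t := Real.sin_pos_of_pos_of_lt_pi ht0 (by linarith [Real.pi_gt_three])
  have hD : ∀ k, 0 ≤ ∑ i, adjInd G i k * Real.cos (θ i - θ k) := by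
    intro k
    have h1 := energy_second G K ω θ (Pi.single k t)
    rw [sum_single_second] at h1
    have hn : ‖(Pi.single k t : Fin N → ℝ)‖ < ε := by
      rw [Pi.norm_single, Real.norm_eq_abs, abs_of_pos ht0]; linarith
    have h2 := hnear (Pi.single k t) hn
    have h3 := hnear (-Pi.single k t) (by rwa [norm_neg])
    rw [← sub_eq_add_neg] at h3
    by_contra hneg
    push Not at hneg
    have : K * (2 * (1 - Real.cos t) * ∑ i, adjInd G i k * Real.cos (θ i - θ k)) < 0 :=
      mul_neg_of_pos_of_neg hK (mul_neg_of_pos_of_neg (by linarith) hneg)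
    linarith
  set M : Matrix (Fin N) (Fin N) ℝ := Matrix.of (fun j k : Fin N =>
          if j = k then -K * ∑ i, adjInd G i k * Real.cos (θ i - θ k)
          else K * adjInd G j k * Real.cos (θ j - θ k)) with hM
  have hH : M.IsHermitian := by
    ext j k
    by_cases h : j = k
    · subst h; simp
    · simp only [hM, Matrix.conjTranspose_apply, Matrix.of_apply, h, Ne.symm h, if_false, star_trivial]
      rw [adjInd_symm' G k j, ← Real.cos_neg (θ k - θ j), neg_sub]
  have hpsd : M.PosSemidef := by
    rw [hH.posSemidef_iff_eigenvalues_nonneg]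
    intro i
    by_contra hneg
    simp only [Pi.zero_apply, not_le] at hneg
    refine hno ⟨_, hH.eigenvalues i, ?_, hneg, hH.mulVec_eigenvectorBasis i⟩
    intro h0
    exact hH.eigenvectorBasis.orthonormal.ne_zero i (by ext j; exact congrFun h0 j)
  have htr : M.trace = 0 := by
    apply le_antisymm _ hpsd.trace_nonneg
    apply Finset.sum_nonpos
    intro k _
    simp only [hM, Matrix.diag_apply, Matrix.of_apply, if_true]
    have := mul_nonneg hK.le (hD k)
    linarith
  have hM0 : M = 0 := hpsd.trace_eq_zero_iff.1 htr
  have hc : ∀ p q, adjInd G p q * Real.cos (θ p - θ q) = 0 := by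
    intro p q
    by_cases h : p = q
    · subst h; simp [adjInd_self']
    · have := congrFun (congrFun hM0 p) q
      simp only [hM, Matrix.of_apply, h, if_false, Matrix.zero_apply, mul_assoc] at this
      exact (mul_eq_zero.1 this).resolve_left hK.ne'
  have hconst : ∀ x : Fin N → ℝ, ‖x‖ < ε → energyNonId G K ω (θ + x) = energyNonId G K ω θ := by
    intro x hx
    have h1 := energy_second G K ω θ x
    simp only [← mul_assoc, hc, zero_mul, Finset.sum_const_zero, mul_zero] at h1
    have h2 := hnear x hx
    have h3 := hnear (-x) (by rwa [norm_neg])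
    rw [← sub_eq_add_neg] at h3
    linarith
  obtain ⟨e, he⟩ := hE
  induction e using Sym2.ind with
  | _ k l =>
  have hadj : G.Adj k l := he
  have ha : adjInd G k l = 1 := by simp [adjInd, hadj]
  have h1 := energy_mixed G K ω θ (Pi.single k t) (Pi.single l (-t)) hc
  rw [sum_mixed G θ k l hadj.ne t _ _ rfl rfl] at h1
  have n1 : ‖(Pi.single k t : Fin N → ℝ)‖ = t := by
    rw [Pi.norm_single, Real.norm_eq_abs, abs_of_pos ht0]
  have n2 : ‖(Pi.single l (-t) : Fin N → ℝ)‖ = t := by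
    rw [Pi.norm_single, norm_neg, Real.norm_eq_abs, abs_of_pos ht0]
  rw [add_assoc θ, hconst (Pi.single k t) (by rw [n1]; linarith),
    hconst (Pi.single l (-t)) (by rw [n2]; linarith),
    hconst ((Pi.single k t : Fin N → ℝ) + (Pi.single l (-t) : Fin N → ℝ)) (by
      refine (norm_add_le _ _).trans_lt ?_
      rw [n1, n2]; exact htε), ha, Real.sin_two_mul] at h1
  have hcos := hc k l
  rw [ha, one_mul] at hcos
  have hs : Real.sin (θ k - θ l) ≠ 0 := by
    intro h
    have := Real.sin_sq_add_cos_sq (θ k - θ l)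
    rw [h, hcos] at this
    norm_num at this
  have h4 : K * Real.sin (θ k - θ l) * (Real.sin t * (1 - Real.cos t)) = 0 := by
    linear_combination h1 / 2
  have : K * Real.sin (θ k - θ l) * (Real.sin t * (1 - Real.cos t)) ≠ 0 :=
    mul_ne_zero (mul_ne_zero hK.ne' hs) (mul_ne_zero hsint.ne' (by linarith))
  exact this h4
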